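/- arXiv:math/0403555 — 5 statements merged into one kernel-verified Lean document; each statement's English description precedes it below -/
import Mathlib

section
/- Let 𝔥 be a finite-dimensional real Lie algebra and let 𝔤 = 𝔥 ⊕ ℝe₀ as a vector space. Given a pair (ψ, f) ∈ End(𝔥) × 𝔥*, the skew bilinear extension of the bracket of 𝔥 defined by [x, e₀] := ψ(x) + f(x)e₀ for x ∈ 𝔥 (keeping [x,y] = [x,y]_𝔥 for x,y ∈ 𝔥) is a Lie bracket on 𝔤 if and only if f([x,y]) = 0 for all x,y ∈ 𝔥 and ψ([x,y]) = [ψ(x), y] + [x, ψ(y)] − f(x)ψ(y) + f(y)ψ(x) for all x,y ∈ 𝔥. Conversely, every Lie algebra 𝔤 containing 𝔥 as a codimension-1 subalgebra arises in this way from such a pair (ψ, f), after choosing a line ℝe₀ complementary to 𝔥. -/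
set_option maxHeartbeats 1000000
set_option maxRecDepth 8000

noncomputable section

namespace ContactLie

/-- The skew-bilinear extension to `𝔥 ⊕ ℝ e₀` of the bracket of `𝔥`, determined by a pair
`(ψ, f)` through `⁅x, e₀⁆ = ψ x + f x • e₀`; an element `(x, a)` represents `x + a e₀`. -/
def extBracket {H : Type*} [LieRing H] [LieAlgebra ℝ H]
    (ψ : H →ₗ[ℝ] H) (f : Module.Dual ℝ H) (p q : H × ℝ) : H × ℝ :=
  (⁅p.1, q.1⁆ + q.2 • ψ p.1 - p.2 • ψ q.1, q.2 * f p.1 - p.2 * f q.1)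

theorem extBracket_self {H : Type*} [LieRing H] [LieAlgebra ℝ H]
    (ψ : H →ₗ[ℝ] H) (f : Module.Dual ℝ H) (u : H × ℝ) : extBracket ψ f u u = 0 := by
  simp [extBracket]

/-- The Leibniz identity for `extBracket ψ f` is equivalent to the compatibility conditions on
`(ψ, f)`. -/
theorem extBracket_leibniz_iff {H : Type*} [LieRing H] [LieAlgebra ℝ H]
    (ψ : H →ₗ[ℝ] H) (f : Module.Dual ℝ H) :
    (∀ u v w : H × ℝ,
        extBracket ψ f u (extBracket ψ f v w) =
          extBracket ψ f (extBracket ψ f u v) w + extBracket ψ f v (extBracket ψ f u w)) ↔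
      ((∀ x y : H, f ⁅x, y⁆ = 0) ∧
        (∀ x y : H, ψ ⁅x, y⁆ = ⁅ψ x, y⁆ + ⁅x, ψ y⁆ - f x • ψ y + f y • ψ x)) := by
  constructor
  · intro h
    refine ⟨fun x y => ?_, fun x y => ?_⟩
    · have h2 := congrArg Prod.snd (h (x, 0) (y, 0) (0, 1))
      simp [extBracket] at h2
      linarith
    · have h1 := congrArg Prod.fst (h (x, 0) (y, 0) (0, 1))
      simp [extBracket] at h1
      rw [← lie_skew y (ψ x)] at h1
      linear_combination (norm := module) (-1 : ℝ) • h1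
  · rintro ⟨hf, hψ⟩ ⟨x, a⟩ ⟨y, b⟩ ⟨z, c⟩
    apply Prod.ext
    · simp only [extBracket, Prod.fst_add, map_add, map_sub, map_smul, hψ, lie_add, lie_sub,
        lie_smul, add_lie, sub_lie, smul_lie]
      rw [leibniz_lie x y z, ← lie_skew (ψ x) y, ← lie_skew (ψ x) z, ← lie_skew (ψ y) z]
      module
    · simp only [extBracket, Prod.snd_add, map_add, map_sub, map_smul, hf, smul_eq_mul]
      ring

/-- Bracketing a codimension-one subalgebra with a vector `e₀` spanning a complement decomposes
along the subalgebra and the line through `e₀`. -/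
theorem exists_lie_eq_add_smul {G : Type*} [LieRing G] [LieAlgebra ℝ G]
    (K : LieSubalgebra ℝ G) {e₀ : G} (he : e₀ ∉ K)
    (htop : K.toSubmodule ⊔ Submodule.span ℝ {e₀} = ⊤) :
    ∃ (ψ : K →ₗ[ℝ] K) (f : Module.Dual ℝ K),
      ∀ x : K, ⁅(x : G), e₀⁆ = (ψ x : G) + f x • e₀ := by
  have hne : e₀ ≠ 0 := fun h => he (h ▸ K.zero_mem)
  have hc : IsCompl K.toSubmodule (Submodule.span ℝ {e₀}) :=
    ⟨(Submodule.disjoint_span_singleton' hne).2 he, codisjoint_iff.2 htop⟩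
  let D : K →ₗ[ℝ] G := -(LieAlgebra.ad ℝ G e₀ : G →ₗ[ℝ] G) ∘ₗ K.toSubmodule.subtype
  have hD (x : K) : D x = ⁅(x : G), e₀⁆ := lie_skew _ _
  refine ⟨Submodule.projectionOnto _ _ hc ∘ₗ D,
    (LinearEquiv.coord ℝ G e₀ hne).toLinearMap ∘ₗ
      Submodule.projectionOnto _ _ hc.symm ∘ₗ D, fun x => ?_⟩
  rw [← hD]
  simp only [LinearMap.comp_apply, LinearEquiv.coe_coe, LinearEquiv.coord_apply_smul]
  exact (Submodule.projection_add_projection_eq_self hc (D x)).symm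

/-- If `⁅x, e₀⁆ = ψ x + f x • e₀` on a subalgebra not containing `e₀`, then `(ψ, f)` satisfies
the compatibility conditions. -/
theorem compatible_of_lie_eq_add_smul {G : Type*} [LieRing G] [LieAlgebra ℝ G]
    (K : LieSubalgebra ℝ G) {e₀ : G} (he : e₀ ∉ K) (ψ : K →ₗ[ℝ] K) (f : Module.Dual ℝ K)
    (h : ∀ x : K, ⁅(x : G), e₀⁆ = (ψ x : G) + f x • e₀) (x y : K) :
    f ⁅x, y⁆ = 0 ∧ ψ ⁅x, y⁆ = ⁅ψ x, y⁆ + ⁅x, ψ y⁆ - f x • ψ y + f y • ψ x := by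
  have key : f ⁅x, y⁆ • e₀ =
      ((⁅ψ x, y⁆ + ⁅x, ψ y⁆ - f x • ψ y + f y • ψ x - ψ ⁅x, y⁆ : K) : G) := by
    have hj := leibniz_lie (x : G) (y : G) e₀
    have hxy := h ⁅x, y⁆
    rw [LieSubalgebra.coe_bracket] at hxy
    rw [hxy, h x, h y, lie_add, lie_add, lie_smul, lie_smul, h x, h y,
      ← lie_skew (y : G) (ψ x : G)] at hj
    push_cast
    linear_combination (norm := module) (-1 : ℝ) • hj
  have hf : f ⁅x, y⁆ = 0 := by
    by_contra hne
    apply he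
    have := K.smul_mem (f ⁅x, y⁆)⁻¹ (key ▸ Subtype.property _ : f ⁅x, y⁆ • e₀ ∈ K)
    rwa [inv_smul_smul₀ hne] at this
  refine ⟨hf, ?_⟩
  rw [hf, zero_smul, eq_comm, ZeroMemClass.coe_eq_zero, sub_eq_zero] at key
  exact key.symm

/-- The extension `extBracket ψ f` of the bracket of `𝔥` to `𝔤 = 𝔥 ⊕ ℝ e₀`
is a Lie bracket (it is bilinear and alternating by construction, so this means the Leibniz
(Jacobi) identity) iff `f` vanishes on brackets and
`ψ ⁅x, y⁆ = ⁅ψ x, y⁆ + ⁅x, ψ y⁆ - f x • ψ y + f y • ψ x`. Conversely, every Lie algebra `G`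
containing `𝔥` as a codimension-1 subalgebra arises this way from such a pair, after choosing
a complementary line `ℝ e₀`. -/
theorem codim_one_extension_characterization
    {H : Type*} [LieRing H] [LieAlgebra ℝ H] (ψ : H →ₗ[ℝ] H) (f : Module.Dual ℝ H) :
    (((∀ u : H × ℝ, extBracket ψ f u u = 0) ∧
      ∀ u v w : H × ℝ,
        extBracket ψ f u (extBracket ψ f v w) =
          extBracket ψ f (extBracket ψ f u v) w + extBracket ψ f v (extBracket ψ f u w)) ↔
      ((∀ x y : H, f ⁅x, y⁆ = 0) ∧
        (∀ x y : H, ψ ⁅x, y⁆ = ⁅ψ x, y⁆ + ⁅x, ψ y⁆ - f x • ψ y + f y • ψ x))) ∧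
    (∀ (G : Type*) (_ : LieRing G) (_ : LieAlgebra ℝ G) (H' : LieSubalgebra ℝ G)
        (e₀ : G), e₀ ∉ H' → H'.toSubmodule ⊔ Submodule.span ℝ {e₀} = ⊤ →
      ∃ (ψ' : ↥H' →ₗ[ℝ] ↥H') (f' : Module.Dual ℝ ↥H'),
        (∀ x y : ↥H', f' ⁅x, y⁆ = 0) ∧
        (∀ x y : ↥H', ψ' ⁅x, y⁆ = ⁅ψ' x, y⁆ + ⁅x, ψ' y⁆ - f' x • ψ' y + f' y • ψ' x) ∧
        ∀ x : ↥H', ⁅(x : G), e₀⁆ = (ψ' x : G) + f' x • e₀) := by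
  refine ⟨?_, fun G _ _ K e₀ he htop => ?_⟩
  · rw [← extBracket_leibniz_iff]
    exact and_iff_right (extBracket_self ψ f)
  · obtain ⟨ψ', f', h⟩ := exists_lie_eq_add_smul K he htop
    have hc := compatible_of_lie_eq_add_smul K he ψ' f' h
    exact ⟨ψ', f', fun x y => (hc x y).1, fun x y => (hc x y).2, h⟩

end ContactLie
end
end

section
/- Let 𝔤 be a finite-dimensional real Lie algebra containing a codimension-1 ideal 𝔥 which carries an exact symplectic form α (so dim 𝔤 = 2n+1 and dim 𝔥 = 2n). Choose e₀ ∈ 𝔤 ∖ 𝔥, extend α to 𝔤 by α(e₀) = 0, and let e₀* ∈ 𝔤* satisfy e₀*(e₀) = 1, e₀*(𝔥) = 0. Then for all but at most one value of s ∈ ℝ, the form η_s := α + s e₀* is a contact form on 𝔤; in particular 𝔤 is a contact Lie algebra and the restriction of η_s to 𝔥 equals α. -/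
set_option maxHeartbeats 1000000
set_option maxRecDepth 8000

noncomputable section

namespace ContactLie

section Core

variable {L : Type*} [LieRing L] [LieAlgebra ℝ L]

/-- The Chevalley–Eilenberg differential of a linear form: `∂η (x, y) = -η ⁅x, y⁆`,
as an alternating 2-form. -/
def dee (η : Module.Dual ℝ L) : L [⋀^Fin 2]→ₗ[ℝ] ℝ where
  toFun v := -η ⁅v 0, v 1⁆
  map_update_add' m i x y := by
    fin_cases i <;>
      simp only [Function.update, Fin.forall_fin_two, add_lie, lie_add, map_add, neg_add] <;>
      split <;> simp_all <;> ring
  map_update_smul' m i c x := by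
    fin_cases i <;>
      simp [Function.update, Fin.forall_fin_two, smul_lie, lie_smul, map_smul]
  map_eq_zero_of_eq' v i j hv hij := by
    have h01 : v 0 = v 1 := by
      fin_cases i <;> fin_cases j <;> simp_all
    show -η ⁅v 0, v 1⁆ = 0
    rw [h01, lie_self, map_zero, neg_zero]

/-- A linear form viewed as an alternating 1-form. -/
def oneForm (η : Module.Dual ℝ L) : L [⋀^Fin 1]→ₗ[ℝ] ℝ :=
  AlternatingMap.ofSubsingleton ℝ L ℝ 0 η

/-- The wedge product of real-valued alternating forms. -/
def wedge {a b : ℕ} (f : L [⋀^Fin a]→ₗ[ℝ] ℝ) (g : L [⋀^Fin b]→ₗ[ℝ] ℝ) :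
    L [⋀^Fin (a + b)]→ₗ[ℝ] ℝ :=
  AlternatingMap.domDomCongr finSumFinEquiv
    ((TensorProduct.lid ℝ ℝ).toLinearMap.compAlternatingMap (f.domCoprod g))

/-- The `n`-th wedge power of an alternating 2-form. -/
def pow2 (ω : L [⋀^Fin 2]→ₗ[ℝ] ℝ) : (n : ℕ) → L [⋀^Fin (2 * n)]→ₗ[ℝ] ℝ
  | 0 => AlternatingMap.constOfIsEmpty ℝ L (Fin 0) 1
  | n + 1 => wedge (pow2 ω n) ω

/-- `η` is a contact form on the Lie algebra `L` of dimension `2 n + 1`: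
the alternating `(2 n + 1)`-form `(∂η)ⁿ ∧ η` is nonzero. -/
def IsContact (n : ℕ) (η : Module.Dual ℝ L) : Prop :=
  Module.finrank ℝ L = 2 * n + 1 ∧ wedge (pow2 (dee η) n) (oneForm η) ≠ 0

/-- `α` is an exact symplectic form on the Lie algebra `L` of dimension `2 n`:
the alternating `2 n`-form `(∂α)ⁿ` is nonzero, i.e. `∂α` is nondegenerate. -/
def IsExactSymplectic (n : ℕ) (α : Module.Dual ℝ L) : Prop :=
  Module.finrank ℝ L = 2 * n ∧ pow2 (dee α) n ≠ 0

end Core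

section Wedge

open AlternatingMap TensorProduct

variable {L : Type*} [LieRing L] [LieAlgebra ℝ L]

theorem wedge_add {a b : ℕ} (f : L [⋀^Fin a]→ₗ[ℝ] ℝ) (g₁ g₂ : L [⋀^Fin b]→ₗ[ℝ] ℝ) :
    wedge f (g₁ + g₂) = wedge f g₁ + wedge f g₂ := by
  ext v
  simp only [wedge, ← domCoprod'_apply, TensorProduct.tmul_add, map_add]
  simp

theorem wedge_smul {a b : ℕ} (f : L [⋀^Fin a]→ₗ[ℝ] ℝ) (c : ℝ) (g : L [⋀^Fin b]→ₗ[ℝ] ℝ) :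
    wedge f (c • g) = c • wedge f g := by
  ext v
  simp only [wedge, ← domCoprod'_apply, TensorProduct.tmul_smul, map_smul]
  simp

theorem oneForm_add_smul (η θ : Module.Dual ℝ L) (c : ℝ) :
    oneForm (η + c • θ) = oneForm η + c • oneForm θ := by
  ext v
  simp [oneForm]

variable {M : Type*} [LieRing M] [LieAlgebra ℝ M]

theorem wedge_compLinearMap {a b : ℕ} (f : L [⋀^Fin a]→ₗ[ℝ] ℝ) (g : L [⋀^Fin b]→ₗ[ℝ] ℝ)
    (φ : M →ₗ[ℝ] L) :
    (wedge f g).compLinearMap φ = wedge (f.compLinearMap φ) (g.compLinearMap φ) := by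
  ext v
  simp only [wedge, compLinearMap_apply, domDomCongr_apply,
    LinearMap.compAlternatingMap_apply, domCoprod_apply, sum_apply]
  congr 1
  refine Finset.sum_congr rfl fun σ _ => ?_
  induction σ using Quotient.inductionOn'
  rfl

theorem pow2_compLinearMap (ω : L [⋀^Fin 2]→ₗ[ℝ] ℝ) (φ : M →ₗ[ℝ] L) (n : ℕ) :
    (pow2 ω n).compLinearMap φ = pow2 (ω.compLinearMap φ) n := by
  induction n with
  | zero => rfl
  | succ n ih => rw [pow2, pow2, ← ih, ← wedge_compLinearMap]

theorem dee_compLinearMap (η : Module.Dual ℝ L) (φ : M →ₗ⁅ℝ⁆ L) :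
    (dee η).compLinearMap (φ : M →ₗ[ℝ] L) = dee (η ∘ₗ (φ : M →ₗ[ℝ] L)) := by
  ext v
  simp [dee]

/-- If all but the last argument are annihilated by `β`, then only the trivial shuffle
contributes to the wedge product with `β`. -/
theorem wedge_oneForm_snoc {a : ℕ} (f : L [⋀^Fin a]→ₗ[ℝ] ℝ) (β : Module.Dual ℝ L)
    (w : Fin a → L) (hw : ∀ i, β (w i) = 0) (e : L) :
    wedge f (oneForm β) (Fin.append w ![e]) = f w * β e := by
  suffices h : f.domCoprod (oneForm β) (Fin.append w ![e] ∘ finSumFinEquiv) =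
      f w ⊗ₜ[ℝ] β e by
    simp only [wedge, domDomCongr_apply, LinearMap.compAlternatingMap_apply]
    exact (congrArg (TensorProduct.lid ℝ ℝ) h).trans (TensorProduct.lid_tmul _ _)
  rw [domCoprod_apply, sum_apply]
  refine (Finset.sum_eq_single
    (Quotient.mk'' 1 : Equiv.Perm.ModSumCongr (Fin a) (Fin 1)) ?_ ?_).trans ?_
  · intro σ _ hσ
    induction σ using Quotient.inductionOn' with | _ σ
    rw [domCoprod.summand_mk'']
    rcases hx : σ (Sum.inr 0) with i | j
    · simp [oneForm, hx, hw]
    · refine absurd ?_ hσ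
      refine (Quotient.sound' ?_).symm
      rw [QuotientGroup.leftRel_apply, inv_one, one_mul]
      apply Equiv.Perm.mem_sumCongrHom_range_of_perm_mapsTo_inl
      rw [Equiv.Perm.perm_mapsTo_inl_iff_mapsTo_inr]
      rintro _ ⟨k, rfl⟩
      exact ⟨j, by rw [← hx, Subsingleton.elim k 0]⟩
  · simp
  · rw [domCoprod.summand_mk'']
    simp [oneForm]

end Wedge

/-- A linear form vanishing on a codimension-one ideal vanishes on all brackets. -/
theorem dual_lie_eq_zero_of_codim_one_ideal {G : Type*} [LieRing G] [LieAlgebra ℝ G]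
    (H' : LieSubalgebra ℝ G) (hideal : ∀ x : G, ∀ y ∈ H', ⁅x, y⁆ ∈ H')
    (hcodim : Module.finrank ℝ G = Module.finrank ℝ ↥H' + 1)
    (β : Module.Dual ℝ G) {e₀ : G} (hβ₀ : β e₀ = 1) (hβ : ∀ x ∈ H', β x = 0) (x y : G) :
    β ⁅x, y⁆ = 0 := by
  have : FiniteDimensional ℝ G := Module.finite_of_finrank_pos (by omega)
  have hβ_ne : β ≠ 0 := by
    rintro rfl
    simp at hβ₀
  have hker : H'.toSubmodule = LinearMap.ker β := by
    refine Submodule.eq_of_le_of_finrank_eq (fun z hz => hβ z hz) ?_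
    have := Module.Dual.finrank_ker_add_one_of_ne_zero hβ_ne
    have h : Module.finrank ℝ H'.toSubmodule = Module.finrank ℝ H' := rfl
    omega
  have hsub (z : G) : z - β z • e₀ ∈ H' := by
    rw [← LieSubalgebra.mem_toSubmodule, hker]
    simp [hβ₀]
  have h₁ := hβ _ (hideal x _ (hsub y))
  have h₂ := hβ _ (hideal e₀ _ (hsub x))
  rw [lie_sub, lie_smul, map_sub, map_smul, smul_eq_mul] at h₁ h₂
  rw [← lie_skew, map_neg, lie_self, map_zero] at h₂
  have h₃ : β ⁅x, e₀⁆ = 0 := by linarith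
  rw [h₃] at h₁
  linarith

/-- If a Lie algebra `𝔤` contains a codimension-1 ideal `𝔥` carrying an
exact symplectic form `α`, then, extending `α` by `α (e₀) = 0` along a complement `ℝ e₀` and
letting `e₀*` be the form with `e₀* (e₀) = 1`, `e₀* (𝔥) = 0`, the form `η_s = α + s e₀*` is a
contact form on `𝔤` for all but at most one value of `s`; in particular `𝔤` is a contact Lie
algebra, and the restriction of `η_s` to `𝔥` is `α`. -/
theorem codim_one_exact_symplectic_ideal_gives_contact
    {G : Type*} [LieRing G] [LieAlgebra ℝ G] (n : ℕ)
    (H' : LieSubalgebra ℝ G) (hideal : ∀ x : G, ∀ y ∈ H', ⁅x, y⁆ ∈ H')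
    (hcodim : Module.finrank ℝ G = Module.finrank ℝ ↥H' + 1)
    (α : Module.Dual ℝ ↥H') (hα : IsExactSymplectic n α)
    (e₀ : G) (he₀ : e₀ ∉ H')
    (αe : Module.Dual ℝ G) (hαe : ∀ x : ↥H', αe x = α x) (hαe₀ : αe e₀ = 0)
    (β : Module.Dual ℝ G) (hβ₀ : β e₀ = 1) (hβ : ∀ x ∈ H', β x = 0) :
    ∃ s₀ : ℝ, ∀ s : ℝ, s ≠ s₀ →
      IsContact n (αe + s • β) ∧ ∀ x : ↥H', (αe + s • β) x = α x := by
  obtain ⟨hdim, hne⟩ := hα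
  have hdee (s : ℝ) : dee (αe + s • β) = dee αe := by
    ext v
    simp [dee, dual_lie_eq_zero_of_codim_one_ideal H' hideal hcodim β hβ₀ hβ]
  have hres : (pow2 (dee αe) n).compLinearMap (H'.incl : H' →ₗ[ℝ] G) = pow2 (dee α) n := by
    rw [pow2_compLinearMap, dee_compLinearMap]
    congr 2
    ext x
    exact hαe x
  obtain ⟨w, hw⟩ : ∃ w, pow2 (dee α) n w ≠ 0 := by
    contrapose! hne
    exact AlternatingMap.ext hne
  rw [← hres, AlternatingMap.compLinearMap_apply] at hw
  set u : Fin (2 * n) → G := fun i => (H'.incl : H' →ₗ[ℝ] G) (w i)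
  set v : Fin (2 * n + 1) → G := Fin.append u ![e₀]
  have hv : wedge (pow2 (dee αe) n) (oneForm β) v = pow2 (dee αe) n u := by
    rw [wedge_oneForm_snoc _ _ u (fun i => hβ _ (w i).2), hβ₀, mul_one]
  refine ⟨-wedge (pow2 (dee αe) n) (oneForm αe) v / pow2 (dee αe) n u, fun s hs => ⟨⟨?_, ?_⟩, ?_⟩⟩
  · omega
  · intro h
    rw [hdee, oneForm_add_smul, wedge_add, wedge_smul] at h
    have hval := congrArg (fun F => F v) h
    simp only [AlternatingMap.add_apply, AlternatingMap.smul_apply, hv, smul_eq_mul,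
      AlternatingMap.zero_apply] at hval
    refine hs ((eq_div_iff hw).2 ?_)
    linarith
  · intro x
    simp [hαe, hβ _ x.2]

end ContactLie
end
end

section
/- Let 𝔤 be a finite-dimensional real Lie algebra of odd dimension which is decomposable, i.e., 𝔤 = 𝒜₁ ⊕ 𝒜₂ is a direct sum of two nonzero ideals 𝒜₁ and 𝒜₂. Then 𝔤 admits a contact form if and only if either 𝒜₁ admits a contact form and 𝒜₂ admits an exact symplectic form, or 𝒜₂ admits a contact form and 𝒜₁ admits an exact symplectic form. -/
set_option maxHeartbeats 1000000
set_option maxRecDepth 8000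

noncomputable section

namespace ContactLie

section Combinatorics

open Equiv

/-- The standard symplectic pairing on `Fin n × Fin 2`. -/
def stdPairing {n : ℕ} (a b : Fin n × Fin 2) : ℝ :=
  if a.1 = b.1 then ((b.2 : ℕ) : ℝ) - ((a.2 : ℕ) : ℝ) else 0

/-- A permutation matching up the standard pairs is a permutation of the pairs composed with
flips inside the pairs, so its signed weight is nonnegative. -/
theorem sign_mul_prod_stdPairing_nonneg {n : ℕ} (σ : Perm (Fin n × Fin 2)) :
    0 ≤ ((Perm.sign σ : ℤ) : ℝ) * ∏ i, stdPairing (σ (i, 0)) (σ (i, 1)) := by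
  by_cases h : ∏ i, stdPairing (σ (i, 0)) (σ (i, 1)) = 0
  · simp [h]
  replace h := Finset.prod_ne_zero_iff.mp h
  have hfst : ∀ i, (σ (i, 0)).1 = (σ (i, 1)).1 := fun i ↦ by
    by_contra hi
    exact h i (Finset.mem_univ _) (if_neg hi)
  have hsnd : ∀ i, (σ (i, 0)).2 ≠ (σ (i, 1)).2 := fun i hi ↦
    h i (Finset.mem_univ _) (by simp [stdPairing, hi])
  have hsurj : Function.Surjective fun i ↦ (σ (i, 0)).1 := fun j ↦ by
    obtain ⟨⟨i, c⟩, hic⟩ := σ.surjective (j, 0)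
    refine ⟨i, ?_⟩
    fin_cases c
    · exact congrArg Prod.fst hic
    · exact (hfst i).trans (congrArg Prod.fst hic)
  let π : Perm (Fin n) := Equiv.ofBijective _ (Finite.surjective_iff_bijective.mp hsurj)
  let flip : Fin n → Perm (Fin 2) := fun i ↦ if (σ (i, 0)).2 = 0 then 1 else swap 0 1
  have hσ : σ = Equiv.prodCongrLeft (fun _ ↦ π) * Equiv.prodCongrRight flip := by
    ext1 ⟨i, c⟩
    have h₁ : (σ (i, c)).1 = (σ (i, 0)).1 := by
      fin_cases c
      · rfl
      · exact (hfst i).symm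
    have h₂ : (σ (i, c)).2 = flip i c := by
      have := hsnd i
      simp only [flip]
      fin_cases c
      · simp only [Fin.zero_eta]
        split_ifs with h0
        · simp [h0]
        · simp; omega
      · simp only [Fin.mk_one]
        split_ifs with h0
        · simp; omega
        · simp; omega
    exact Prod.ext h₁ h₂
  have hpair : ∀ i, stdPairing (σ (i, 0)) (σ (i, 1)) = ((Perm.sign (flip i) : ℤ) : ℝ) := by
    intro i
    have := hsnd i
    rw [stdPairing, if_pos (hfst i)]
    simp only [flip]
    generalize (σ (i, 0)).2 = a at *
    generalize (σ (i, 1)).2 = b at *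
    fin_cases a <;> fin_cases b <;> simp_all
  have hsign : Perm.sign σ = ∏ i, Perm.sign (flip i) := by
    rw [hσ, Perm.sign_mul, Perm.sign_prodCongrLeft, Perm.sign_prodCongrRight]
    simp
  simp only [hpair, hsign]
  push_cast
  exact mul_self_nonneg _

theorem sum_sign_mul_prod_stdPairing_pos (n : ℕ) :
    0 < ∑ σ : Perm (Fin n × Fin 2),
      ((Perm.sign σ : ℤ) : ℝ) * ∏ i, stdPairing (σ (i, 0)) (σ (i, 1)) :=
  Finset.sum_pos' (fun σ _ ↦ sign_mul_prod_stdPairing_nonneg σ)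
    ⟨1, Finset.mem_univ _, by simp [stdPairing]⟩

end Combinatorics

section SymplecticFamily

variable {V : Type*} [AddCommGroup V] [Module ℝ V]

/-- `e` and `f` form a symplectic family for the bilinear form `B`. -/
structure IsSymplecticFamily (B : V →ₗ[ℝ] V →ₗ[ℝ] ℝ) {k : ℕ} (e f : Fin k → V) : Prop where
  left : ∀ i j, B (e i) (e j) = 0
  right : ∀ i j, B (f i) (f j) = 0
  pair : ∀ i j, B (e i) (f j) = if i = j then 1 else 0

variable {B : V →ₗ[ℝ] V →ₗ[ℝ] ℝ}

theorem IsSymplecticFamily.pair' (hB : B.IsAlt) {k : ℕ} {e f : Fin k → V}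
    (h : IsSymplecticFamily B e f) (i j : Fin k) : B (f i) (e j) = if i = j then -1 else 0 := by
  rw [← hB.neg, h.pair]
  by_cases hij : i = j <;> simp [hij, eq_comm]

theorem IsSymplecticFamily.apply_eq_stdPairing (hB : B.IsAlt) {k : ℕ} {e f : Fin k → V}
    (h : IsSymplecticFamily B e f) (a b : Fin k × Fin 2) :
    B (![e a.1, f a.1] a.2) (![e b.1, f b.1] b.2) = stdPairing a b := by
  obtain ⟨i, c⟩ := a
  obtain ⟨j, d⟩ := b
  fin_cases c <;> fin_cases d <;>
    simp [stdPairing, h.left, h.right, h.pair, h.pair' hB]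

theorem IsSymplecticFamily.linearIndependent (hB : B.IsAlt) {k : ℕ} {e f : Fin k → V}
    (h : IsSymplecticFamily B e f) : LinearIndependent ℝ (Sum.elim e f) := by
  rw [Fintype.linearIndependent_iff]
  intro g hg
  simp only [Fintype.sum_sum_type, Sum.elim_inl, Sum.elim_inr] at hg
  have key : ∀ x, ∑ i, g (.inl i) * B x (e i) + ∑ i, g (.inr i) * B x (f i) = 0 := fun x ↦ by
    simpa [map_sum] using congrArg (B x) hg
  rintro (i | i)
  · simpa [h.right, h.pair' hB] using key (f i)
  · simpa [h.left, h.pair] using key (e i)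

/-- A symplectic family too small to span a complement of the radical can be enlarged. -/
theorem IsSymplecticFamily.exists_extension [FiniteDimensional ℝ V] (hB : B.IsAlt) {k : ℕ}
    {e f : Fin k → V} (h : IsSymplecticFamily B e f)
    (hk : 2 * k + Module.finrank ℝ (LinearMap.ker B) < Module.finrank ℝ V) :
    ∃ e' f' : Fin (k + 1) → V, IsSymplecticFamily B e' f' := by
  let T : V →ₗ[ℝ] (Fin k → ℝ) × (Fin k → ℝ) :=
    (LinearMap.pi fun i ↦ B (e i)).prod (LinearMap.pi fun i ↦ B (f i))
  have hT : ∀ x, x ∈ LinearMap.ker T ↔ (∀ i, B (e i) x = 0) ∧ ∀ i, B (f i) x = 0 := fun x ↦ by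
    simp [T, funext_iff]
  have hdim : Module.finrank ℝ (LinearMap.ker B) < Module.finrank ℝ (LinearMap.ker T) := by
    have h₁ := T.finrank_range_add_finrank_ker
    have h₂ := Submodule.finrank_le (LinearMap.range T)
    simp at h₂
    omega
  obtain ⟨x, hxT, hxB⟩ : ∃ x ∈ LinearMap.ker T, x ∉ LinearMap.ker B := by
    by_contra! hle
    exact hdim.not_ge (Submodule.finrank_mono hle)
  obtain ⟨w, hw⟩ : ∃ w, B x w ≠ 0 := by
    by_contra! h0
    exact hxB (LinearMap.ext h0)
  rw [hT] at hxT
  have hxe : ∀ i, B x (e i) = 0 := fun i ↦ by rw [← hB.neg, hxT.1, neg_zero]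
  have hxf : ∀ i, B x (f i) = 0 := fun i ↦ by rw [← hB.neg, hxT.2, neg_zero]
  let y : V := (B x w)⁻¹ • (w - ∑ i, B (e i) w • f i + ∑ i, B (f i) w • e i)
  have hxy : B x y = 1 := by
    simp [y, map_sum, hxe, hxf, hw]
  have hye : ∀ i, B (e i) y = 0 := fun i ↦ by
    simp [y, map_sum, h.left, h.pair]
  have hyf : ∀ i, B (f i) y = 0 := fun i ↦ by
    simp [y, map_sum, h.right, h.pair' hB]
  have hyf' : ∀ i, B y (f i) = 0 := fun i ↦ by rw [← hB.neg, hyf, neg_zero]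
  refine ⟨Fin.cons x e, Fin.cons y f, ⟨?_, ?_, ?_⟩⟩
  · simp [Fin.forall_fin_succ, h.left, hB.self_eq_zero, hxe, hxT.1]
  · simp [Fin.forall_fin_succ, h.right, hB.self_eq_zero, hyf, hyf']
  · simp [Fin.forall_fin_succ, h.pair, hxy, hxf, hye, Fin.succ_ne_zero,
      (Fin.succ_ne_zero _).symm]

theorem exists_isSymplecticFamily [FiniteDimensional ℝ V] (hB : B.IsAlt) (k : ℕ)
    (hk : 2 * k + Module.finrank ℝ (LinearMap.ker B) ≤ Module.finrank ℝ V + 1) :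
    ∃ e f : Fin k → V, IsSymplecticFamily B e f := by
  induction k with
  | zero => exact ⟨0, 0, ⟨nofun, nofun, nofun⟩⟩
  | succ k ih =>
    obtain ⟨e, f, h⟩ := ih (by omega)
    exact h.exists_extension hB (by omega)

/-- An alternating form on an odd-dimensional space is degenerate. -/
theorem ker_ne_bot_of_odd_finrank [FiniteDimensional ℝ V] (hB : B.IsAlt)
    (hodd : Odd (Module.finrank ℝ V)) : LinearMap.ker B ≠ ⊥ := by
  intro hker
  obtain ⟨n, hn⟩ := hodd
  obtain ⟨e, f, h⟩ := exists_isSymplecticFamily hB (n + 1) (by rw [hker]; simp; omega)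
  have := (h.linearIndependent hB).fintype_card_le_finrank
  simp at this
  omega

end SymplecticFamily

section Wedge

open Equiv

variable {L : Type*} [LieRing L] [LieAlgebra ℝ L]

theorem wedge_alternatization_apply {a b : ℕ} (f : MultilinearMap ℝ (fun _ : Fin a ↦ L) ℝ)
    (g : MultilinearMap ℝ (fun _ : Fin b ↦ L) ℝ) (v : Fin (a + b) → L) :
    wedge (MultilinearMap.alternatization f) (MultilinearMap.alternatization g) v =
      ∑ σ : Perm (Fin a ⊕ Fin b), ((Perm.sign σ : ℤ) : ℝ) *
        (f (fun i ↦ v (finSumFinEquiv (σ (.inl i)))) *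
          g (fun i ↦ v (finSumFinEquiv (σ (.inr i))))) := by
  simp only [wedge, ← MultilinearMap.domCoprod_alternization, AlternatingMap.domDomCongr_apply,
    LinearMap.compAlternatingMap_apply, MultilinearMap.alternatization_apply, map_sum]
  refine Finset.sum_congr rfl fun σ _ ↦ ?_
  rw [Units.smul_def, map_zsmul, zsmul_eq_mul]
  simp [MultilinearMap.domCoprod_apply]

theorem wedge_smul_smul {a b : ℕ} (c d : ℝ) (f : L [⋀^Fin a]→ₗ[ℝ] ℝ) (g : L [⋀^Fin b]→ₗ[ℝ] ℝ) :
    wedge (c • f) (d • g) = (c * d) • wedge f g := by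
  ext v
  simp only [wedge, ← AlternatingMap.domCoprod'_apply, TensorProduct.smul_tmul_smul, map_smul]
  simp

theorem wedge_apply {a b : ℕ} (f : L [⋀^Fin a]→ₗ[ℝ] ℝ) (g : L [⋀^Fin b]→ₗ[ℝ] ℝ)
    (v : Fin (a + b) → L) :
    ((a.factorial : ℝ) * (b.factorial : ℝ)) * wedge f g v =
      ∑ σ : Perm (Fin a ⊕ Fin b), ((Perm.sign σ : ℤ) : ℝ) *
        (f (fun i ↦ v (finSumFinEquiv (σ (.inl i)))) *
          g (fun i ↦ v (finSumFinEquiv (σ (.inr i))))) := by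
  have h := wedge_alternatization_apply (f : MultilinearMap ℝ (fun _ : Fin a ↦ L) ℝ)
    (g : MultilinearMap ℝ (fun _ : Fin b ↦ L) ℝ) v
  rw [AlternatingMap.coe_alternatization, AlternatingMap.coe_alternatization,
    ← Nat.cast_smul_eq_nsmul ℝ, ← Nat.cast_smul_eq_nsmul ℝ, wedge_smul_smul] at h
  simpa using h

/-- Forms annihilated by contraction with `x` are stable under the wedge product. -/
theorem wedge_eq_zero_of_mem {a b : ℕ} {f : L [⋀^Fin a]→ₗ[ℝ] ℝ} {g : L [⋀^Fin b]→ₗ[ℝ] ℝ} {x : L}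
    (hf : ∀ v i, v i = x → f v = 0) (hg : ∀ v i, v i = x → g v = 0)
    (v : Fin (a + b) → L) (i : Fin (a + b)) (hi : v i = x) : wedge f g v = 0 := by
  have hpos : ((a.factorial : ℝ) * (b.factorial : ℝ)) ≠ 0 := by positivity
  refine (mul_eq_zero.mp ?_).resolve_left hpos
  rw [wedge_apply]
  refine Finset.sum_eq_zero fun σ _ ↦ ?_
  rcases hj : σ.symm (finSumFinEquiv.symm i) with j | j
  · rw [hf _ j (by simp [← hj, hi])]; simp
  · rw [hg _ j (by simp [← hj, hi])]; simp

theorem pow2_eq_zero_of_mem {ω : L [⋀^Fin 2]→ₗ[ℝ] ℝ} {x : L} (hω : ∀ v i, v i = x → ω v = 0) :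
    ∀ (n : ℕ) (v : Fin (2 * n) → L) (i : Fin (2 * n)), v i = x → pow2 ω n v = 0
  | 0, _, i, _ => i.elim0
  | n + 1, v, i, hi => wedge_eq_zero_of_mem (pow2_eq_zero_of_mem hω n) hω v i hi

/-- A form of top degree annihilated by contraction with a nonzero vector is zero. -/
theorem eq_zero_of_mem {V : Type*} [AddCommGroup V] [Module ℝ V] [FiniteDimensional ℝ V]
    {m : ℕ} (hm : Module.finrank ℝ V = m) {f : V [⋀^Fin m]→ₗ[ℝ] ℝ} {x : V} (hx : x ≠ 0)
    (hf : ∀ v i, v i = x → f v = 0) : f = 0 := by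
  have hli : LinearIndepOn ℝ id {x} := LinearIndepOn.singleton hx
  let b := Module.Basis.extend hli
  have := Module.Finite.finite_basis b
  have := Fintype.ofFinite (hli.extend (Set.subset_univ _))
  refine b.ext_alternating fun v hv ↦ ?_
  have hcard : Fintype.card (Fin m) = Fintype.card (hli.extend (Set.subset_univ _)) := by
    rw [← Module.finrank_eq_card_basis b, hm, Fintype.card_fin]
  obtain ⟨i, hi⟩ := ((Fintype.bijective_iff_injective_and_card v).mpr ⟨hv, hcard⟩).surjective
    ⟨x, hli.subset_extend _ rfl⟩
  exact hf _ i (by simp [hi, b])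

/-- A form annihilated by contraction with `z`, wedged with a linear form nonzero at `z`. -/
theorem wedge_oneForm_ne_zero {a : ℕ} {f : L [⋀^Fin a]→ₗ[ℝ] ℝ} {η : Module.Dual ℝ L} {z : L}
    (hf : ∀ v i, v i = z → f v = 0) (hz : η z ≠ 0) (hne : f ≠ 0) :
    wedge f (oneForm η) ≠ 0 := by
  obtain ⟨v, hv⟩ : ∃ v, f v ≠ 0 := by
    by_contra! h
    exact hne (AlternatingMap.ext h)
  intro h0
  let u : Fin a ⊕ Fin 1 → L := Sum.elim v fun _ ↦ z
  have h := wedge_apply f (oneForm η) (u ∘ finSumFinEquiv.symm)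
  simp only [h0, AlternatingMap.zero_apply, mul_zero, Function.comp_apply,
    Equiv.symm_apply_apply] at h
  have hmul : 0 < ∑ σ : Perm (Fin a ⊕ Fin 1), (f v * η z) * (((Perm.sign σ : ℤ) : ℝ) *
      (f (fun i ↦ u (σ (.inl i))) * oneForm η (fun i ↦ u (σ (.inr i))))) := by
    refine Finset.sum_pos' (fun σ _ ↦ ?_) ⟨1, Finset.mem_univ _, ?_⟩
    · by_cases hσ : ∃ i, σ (.inl i) = .inr 0
      · obtain ⟨i, hi⟩ := hσ
        rw [hf (fun i ↦ u (σ (.inl i))) i (by simp [hi, u]), zero_mul, mul_zero, mul_zero]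
      · have hmaps : Set.MapsTo σ (Set.range Sum.inl) (Set.range Sum.inl) := by
          rintro _ ⟨i, rfl⟩
          rcases hi : σ (.inl i) with j | j
          · exact ⟨j, rfl⟩
          · exact absurd ⟨i, by rw [hi, Subsingleton.elim j 0]⟩ hσ
        obtain ⟨⟨τ, ρ⟩, rfl⟩ := Perm.mem_sumCongrHom_range_of_perm_mapsTo_inl hmaps
        have hτ : f (fun i ↦ v (τ i)) = Perm.sign τ • f v := f.map_perm v τ
        simp only [Perm.sumCongrHom_apply, Perm.sign_sumCongr, Subsingleton.elim ρ 1,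
          Perm.sumCongr_apply, Sum.map_inl, Sum.map_inr, u, Sum.elim_inl, Sum.elim_inr, hτ,
          oneForm, AlternatingMap.ofSubsingleton_apply_apply]
        rcases Int.units_eq_one_or (Perm.sign τ) with hs | hs <;> simp [hs] <;>
          exact mul_self_nonneg _
    · simp only [Perm.sign_one, Perm.one_apply, u, Sum.elim_inl, Sum.elim_inr, oneForm,
        AlternatingMap.ofSubsingleton_apply_apply]
      simpa using mul_self_pos.mpr (mul_ne_zero hv hz)
  rw [← Finset.mul_sum, ← h, mul_zero] at hmul
  exact lt_irrefl _ hmul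

/-- The tensor power of a 2-form, a multilinear map whose alternatization is a multiple of the
wedge power. -/
def tensorPow2 (ω : L [⋀^Fin 2]→ₗ[ℝ] ℝ) : (n : ℕ) → MultilinearMap ℝ (fun _ : Fin (2 * n) ↦ L) ℝ
  | 0 => MultilinearMap.constOfIsEmpty ℝ (fun _ : Fin 0 ↦ L) 1
  | n + 1 => ((TensorProduct.lid ℝ ℝ).toLinearMap.compMultilinearMap
      ((tensorPow2 ω n).domCoprod (ω : MultilinearMap ℝ (fun _ : Fin 2 ↦ L) ℝ))).domDomCongr
        (finSumFinEquiv : Fin (2 * n) ⊕ Fin 2 ≃ Fin (2 * n + 2))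

theorem tensorPow2_apply (ω : L [⋀^Fin 2]→ₗ[ℝ] ℝ) (n : ℕ) (v : Fin (2 * n) → L) :
    tensorPow2 ω n v = ∏ i : Fin n, ω ![v ⟨2 * i, by omega⟩, v ⟨2 * i + 1, by omega⟩] := by
  induction n with
  | zero => simp [tensorPow2]
  | succ n ih =>
    rw [Fin.prod_univ_castSucc]
    simp only [tensorPow2, MultilinearMap.domDomCongr_apply, LinearMap.compMultilinearMap_apply,
      MultilinearMap.domCoprod_apply, LinearEquiv.coe_coe, TensorProduct.lid_tmul, smul_eq_mul, ih]
    congr 1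
    refine congrArg ω (funext fun i ↦ ?_)
    fin_cases i <;> rfl

theorem two_pow_smul_pow2 (ω : L [⋀^Fin 2]→ₗ[ℝ] ℝ) (n : ℕ) :
    (2 ^ n : ℝ) • pow2 ω n = MultilinearMap.alternatization (tensorPow2 ω n) := by
  induction n with
  | zero =>
    ext v
    simp [pow2, tensorPow2, MultilinearMap.alternatization_apply]
  | succ n ih =>
    have h2 : (2 : ℝ) • ω =
        MultilinearMap.alternatization (ω : MultilinearMap ℝ (fun _ : Fin 2 ↦ L) ℝ) := by
      rw [AlternatingMap.coe_alternatization, ← Nat.cast_smul_eq_nsmul ℝ]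
      simp
    ext v
    rw [pow_succ, pow2, ← wedge_smul_smul, ih, h2, wedge_alternatization_apply,
      MultilinearMap.alternatization_apply]
    refine Fintype.sum_equiv (finSumFinEquiv : Fin (2 * n) ⊕ Fin 2 ≃ Fin (2 * n + 2)).permCongr
      _ _ fun σ ↦ ?_
    rw [Units.smul_def, zsmul_eq_mul]
    erw [Perm.sign_permCongr]
    simp [tensorPow2]

/-- The wedge power of a 2-form evaluated on a symplectic family. -/
theorem pow2_ne_zero_of_isSymplecticFamily {ω : L [⋀^Fin 2]→ₗ[ℝ] ℝ} {B : L →ₗ[ℝ] L →ₗ[ℝ] ℝ}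
    (hω : ∀ x y, ω ![x, y] = B x y) (hB : B.IsAlt) {n : ℕ} {e f : Fin n → L}
    (h : IsSymplecticFamily B e f) : pow2 ω n ≠ 0 := by
  intro h0
  let q : Fin n × Fin 2 ≃ Fin (2 * n) := finProdFinEquiv.trans (finCongr (mul_comm n 2))
  let u : Fin n × Fin 2 → L := fun a ↦ ![e a.1, f a.1] a.2
  have hval := DFunLike.congr_fun (two_pow_smul_pow2 ω n) (u ∘ q.symm)
  rw [h0, smul_zero, AlternatingMap.zero_apply, MultilinearMap.alternatization_apply] at hval
  refine (sum_sign_mul_prod_stdPairing_pos n).ne (hval.trans ?_)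
  refine (Fintype.sum_equiv q.permCongr _ _ fun σ ↦ ?_).symm
  have hq0 : ∀ i : Fin n, (⟨2 * i, by omega⟩ : Fin (2 * n)) = q (i, 0) := fun i ↦ by
    ext; simp [q]
  have hq1 : ∀ i : Fin n, (⟨2 * i + 1, by omega⟩ : Fin (2 * n)) = q (i, 1) := fun i ↦ by
    ext; simp [q]; omega
  rw [Units.smul_def, zsmul_eq_mul, Perm.sign_permCongr, MultilinearMap.domDomCongr_apply,
    tensorPow2_apply]
  simp only [hω, hq0, hq1, Equiv.permCongr_apply, Function.comp_apply, Equiv.symm_apply_apply, u,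
    h.apply_eq_stdPairing hB]

end Wedge

section Forms

variable {L : Type*} [LieRing L] [LieAlgebra ℝ L]

/-- The bilinear form underlying `dee η`. -/
def deeBilin (η : Module.Dual ℝ L) : L →ₗ[ℝ] L →ₗ[ℝ] ℝ :=
  (LieModule.toEnd ℝ L L : L →ₗ[ℝ] Module.End ℝ L).compr₂ (-η)

theorem deeBilin_apply (η : Module.Dual ℝ L) (x y : L) : deeBilin η x y = -η ⁅x, y⁆ := rfl

theorem deeBilin_isAlt (η : Module.Dual ℝ L) : (deeBilin η).IsAlt := fun x ↦ by
  simp [deeBilin_apply]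

theorem dee_apply (η : Module.Dual ℝ L) (x y : L) : dee η ![x, y] = deeBilin η x y := rfl

theorem mem_ker_deeBilin {η : Module.Dual ℝ L} {x : L} :
    x ∈ LinearMap.ker (deeBilin η) ↔ ∀ y, η ⁅x, y⁆ = 0 := by
  simp [LinearMap.ext_iff, deeBilin_apply]

theorem dee_eq_zero_of_mem {η : Module.Dual ℝ L} {x : L} (hx : ∀ y, η ⁅x, y⁆ = 0)
    (v : Fin 2 → L) (i : Fin 2) (hi : v i = x) : dee η v = 0 := by
  change -η ⁅v 0, v 1⁆ = 0
  fin_cases i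
  · rw [show v 0 = x from hi, hx, neg_zero]
  · rw [show v 1 = x from hi, ← lie_skew, map_neg, hx, neg_zero, neg_zero]

variable [FiniteDimensional ℝ L]

theorem exists_ne_zero_of_odd_finrank (hodd : Odd (Module.finrank ℝ L)) (η : Module.Dual ℝ L) :
    ∃ z : L, z ≠ 0 ∧ ∀ y : L, η ⁅z, y⁆ = 0 := by
  obtain ⟨z, hz, hz0⟩ :=
    Submodule.exists_mem_ne_zero_of_ne_bot (ker_ne_bot_of_odd_finrank (deeBilin_isAlt η) hodd)
  exact ⟨z, hz0, mem_ker_deeBilin.mp hz⟩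

/-- `α` is an exact symplectic form iff `∂α` has trivial radical. -/
theorem isExactSymplectic_iff {n : ℕ} (hn : Module.finrank ℝ L = 2 * n) (α : Module.Dual ℝ L) :
    IsExactSymplectic n α ↔ ∀ x : L, (∀ y : L, α ⁅x, y⁆ = 0) → x = 0 := by
  constructor
  · rintro ⟨-, hne⟩ x hx
    by_contra hx0
    exact hne (eq_zero_of_mem hn hx0 (pow2_eq_zero_of_mem (dee_eq_zero_of_mem hx) n))
  · intro h
    have hker : LinearMap.ker (deeBilin α) = ⊥ :=
      (Submodule.eq_bot_iff _).mpr fun x hx ↦ h x (mem_ker_deeBilin.mp hx)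
    obtain ⟨e, f, hef⟩ := exists_isSymplecticFamily (deeBilin_isAlt α) n (by
      rw [hker, finrank_bot]; omega)
    exact ⟨hn, pow2_ne_zero_of_isSymplecticFamily (dee_apply α) (deeBilin_isAlt α) hef⟩

/-- `η` is a contact form iff no nonzero vector of the radical of `∂η` is killed by `η`. -/
theorem isContact_iff {n : ℕ} (hn : Module.finrank ℝ L = 2 * n + 1) (η : Module.Dual ℝ L) :
    IsContact n η ↔ ∀ x : L, (∀ y : L, η ⁅x, y⁆ = 0) → η x = 0 → x = 0 := by
  constructor
  · rintro ⟨-, hne⟩ x hx hηx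
    by_contra hx0
    refine hne (eq_zero_of_mem hn hx0 (wedge_eq_zero_of_mem
      (pow2_eq_zero_of_mem (dee_eq_zero_of_mem hx) n) fun v i hi ↦ ?_))
    rw [Subsingleton.elim i 0] at hi
    simp [oneForm, hi, hηx]
  · intro h
    have hker : Module.finrank ℝ (LinearMap.ker (deeBilin η)) ≤ 1 := by
      have hinj : Function.Injective (η.domRestrict (LinearMap.ker (deeBilin η))) := by
        rw [injective_iff_map_eq_zero]
        exact fun x hx ↦ Subtype.ext (h x (mem_ker_deeBilin.mp x.2) hx)
      simpa using LinearMap.finrank_le_finrank_of_injective hinj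
    obtain ⟨e, f, hef⟩ := exists_isSymplecticFamily (deeBilin_isAlt η) n (by omega)
    obtain ⟨z, hz0, hz⟩ := exists_ne_zero_of_odd_finrank ⟨n, hn⟩ η
    exact ⟨hn, wedge_oneForm_ne_zero (pow2_eq_zero_of_mem (dee_eq_zero_of_mem hz) n)
      (fun hηz ↦ hz0 (h z hz hηz))
      (pow2_ne_zero_of_isSymplecticFamily (dee_apply η) (deeBilin_isAlt η) hef)⟩

end Forms

section Decomposition

variable {G : Type*} [LieRing G] [LieAlgebra ℝ G] {A₁ A₂ : LieSubalgebra ℝ G}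

theorem lie_eq_zero_of_isCompl (h₁ : ∀ x : G, ∀ y ∈ A₁, ⁅x, y⁆ ∈ A₁)
    (h₂ : ∀ x : G, ∀ y ∈ A₂, ⁅x, y⁆ ∈ A₂) (hcompl : IsCompl A₁.toSubmodule A₂.toSubmodule)
    {x y : G} (hx : x ∈ A₁) (hy : y ∈ A₂) : ⁅x, y⁆ = 0 := by
  refine Submodule.disjoint_def.mp hcompl.disjoint _ ?_ (h₂ x y hy)
  rw [← lie_skew]
  exact neg_mem (h₁ y x hx)

theorem forall_apply_lie_eq_zero (h₁ : ∀ x : G, ∀ y ∈ A₁, ⁅x, y⁆ ∈ A₁)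
    (h₂ : ∀ x : G, ∀ y ∈ A₂, ⁅x, y⁆ ∈ A₂) (hcompl : IsCompl A₁.toSubmodule A₂.toSubmodule)
    {η : Module.Dual ℝ G} {x : G} (hx : x ∈ A₁) (h : ∀ y ∈ A₁, η ⁅x, y⁆ = 0) (y : G) :
    η ⁅x, y⁆ = 0 := by
  obtain ⟨y₁, y₂, hy₁, hy₂, rfl⟩ :=
    Submodule.codisjoint_iff_exists_add_eq.mp hcompl.codisjoint y
  rw [lie_add, lie_eq_zero_of_isCompl h₁ h₂ hcompl hx hy₂, add_zero, h y₁ hy₁]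

variable [FiniteDimensional ℝ G]

/-- A contact form on `A₁ ⊕ A₂` with `A₁` odd-dimensional restricts to a contact form on `A₁` and
an exact symplectic form on `A₂`. -/
theorem exists_isContact_and_exists_isExactSymplectic
    (h₁ : ∀ x : G, ∀ y ∈ A₁, ⁅x, y⁆ ∈ A₁) (h₂ : ∀ x : G, ∀ y ∈ A₂, ⁅x, y⁆ ∈ A₂)
    (hcompl : IsCompl A₁.toSubmodule A₂.toSubmodule) {n k m : ℕ} {η : Module.Dual ℝ G}
    (hη : IsContact n η) (hk : Module.finrank ℝ A₁ = 2 * k + 1) (hm : Module.finrank ℝ A₂ = 2 * m) :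
    (∃ (k : ℕ) (η : Module.Dual ℝ ↥A₁), IsContact k η) ∧
      (∃ (m : ℕ) (α : Module.Dual ℝ ↥A₂), IsExactSymplectic m α) := by
  have hG := (isContact_iff hη.1 η).mp hη
  have hrad : ∀ x : A₁, (∀ y : A₁, η ⁅x, y⁆ = 0) → ∀ y : G, η ⁅(x : G), y⁆ = 0 := fun x hx ↦
    forall_apply_lie_eq_zero h₁ h₂ hcompl x.2 fun y hy ↦ hx ⟨y, hy⟩
  refine ⟨⟨k, η.domRestrict A₁.toSubmodule, (isContact_iff hk _).mpr fun x hx hηx ↦ ?_⟩,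
    ⟨m, η.domRestrict A₂.toSubmodule, (isExactSymplectic_iff hm _).mpr fun x hx ↦ ?_⟩⟩
  · exact Subtype.ext (hG x (hrad x hx) hηx)
  · obtain ⟨z, hz0, hz⟩ := exists_ne_zero_of_odd_finrank ⟨k, hk⟩ (η.domRestrict A₁.toSubmodule)
    have hzG := hrad z hz
    have hηz : η z ≠ 0 := fun h0 ↦ hz0 (Subtype.ext (hG z hzG h0))
    have hxG : ∀ y : G, η ⁅(x : G), y⁆ = 0 :=
      forall_apply_lie_eq_zero h₂ h₁ hcompl.symm x.2 fun y hy ↦ hx ⟨y, hy⟩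
    have hxz : (x : G) - (η x / η z) • (z : G) = 0 := by
      refine hG _ (fun y ↦ ?_) ?_
      · simp [sub_lie, hxG, hzG]
      · simp [hηz]
    refine Subtype.ext (Submodule.disjoint_def.mp hcompl.disjoint _ ?_ x.2)
    rw [sub_eq_zero.mp hxz]
    exact A₁.smul_mem _ z.2

/-- A contact form on `A₁` and an exact symplectic form on `A₂` add up to a contact form on
`A₁ ⊕ A₂`. -/
theorem exists_isContact_of_isContact_of_isExactSymplectic
    (h₁ : ∀ x : G, ∀ y ∈ A₁, ⁅x, y⁆ ∈ A₁) (h₂ : ∀ x : G, ∀ y ∈ A₂, ⁅x, y⁆ ∈ A₂)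
    (hcompl : IsCompl A₁.toSubmodule A₂.toSubmodule) {k m : ℕ} {β : Module.Dual ℝ ↥A₁}
    {α : Module.Dual ℝ ↥A₂} (hβ : IsContact k β) (hα : IsExactSymplectic m α) :
    ∃ (n : ℕ) (η : Module.Dual ℝ G), IsContact n η := by
  have hA₁ := (isContact_iff hβ.1 β).mp hβ
  have hA₂ := (isExactSymplectic_iff hα.1 α).mp hα
  have hdim : Module.finrank ℝ G = 2 * (k + m) + 1 := by
    have := Submodule.finrank_add_eq_of_isCompl hcompl
    have e₁ : Module.finrank ℝ A₁.toSubmodule = 2 * k + 1 := hβ.1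
    have e₂ : Module.finrank ℝ A₂.toSubmodule = 2 * m := hα.1
    omega
  let η : Module.Dual ℝ G := β ∘ₗ A₁.toSubmodule.projectionOnto A₂.toSubmodule hcompl +
    α ∘ₗ A₂.toSubmodule.projectionOnto A₁.toSubmodule hcompl.symm
  have hη₁ : ∀ x : A₁, η x = β x := fun x ↦ by
    have e₁ := Submodule.projectionOnto_apply_left hcompl x
    have e₂ := Submodule.projectionOnto_apply_right hcompl.symm x
    simp only [η, LinearMap.add_apply, LinearMap.comp_apply]
    erw [e₁, e₂]
    simp
  have hη₂ : ∀ x : A₂, η x = α x := fun x ↦ by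
    have e₁ := Submodule.projectionOnto_apply_left hcompl.symm x
    have e₂ := Submodule.projectionOnto_apply_right hcompl x
    simp only [η, LinearMap.add_apply, LinearMap.comp_apply]
    erw [e₁, e₂]
    simp
  refine ⟨k + m, η, (isContact_iff hdim η).mpr fun x hx hηx ↦ ?_⟩
  obtain ⟨x₁, x₂, hx₁, hx₂, rfl⟩ :=
    Submodule.codisjoint_iff_exists_add_eq.mp hcompl.codisjoint x
  have hx₂0 : x₂ = 0 := congrArg Subtype.val (hA₂ ⟨x₂, hx₂⟩ fun y ↦ by
    have := hx y
    rw [add_lie, lie_eq_zero_of_isCompl h₁ h₂ hcompl hx₁ y.2, zero_add] at this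
    rw [← hη₂]
    exact this)
  subst hx₂0
  rw [add_zero] at hx hηx ⊢
  refine congrArg Subtype.val (hA₁ ⟨x₁, hx₁⟩ (fun y ↦ ?_) ?_)
  · rw [← hη₁]
    exact hx y
  · rw [← hη₁]
    exact hηx

end Decomposition

/-- A decomposable Lie algebra `𝔤 = 𝒜₁ ⊕ 𝒜₂` (direct sum of two nonzero
ideals) of odd dimension admits a contact form iff one of the two ideals admits a contact
form and the other admits an exact symplectic form. -/
theorem decomposable_contact_iff
    {G : Type*} [LieRing G] [LieAlgebra ℝ G] [FiniteDimensional ℝ G]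
    (hodd : Odd (Module.finrank ℝ G))
    (A₁ A₂ : LieSubalgebra ℝ G)
    (h₁ : ∀ x : G, ∀ y ∈ A₁, ⁅x, y⁆ ∈ A₁) (h₂ : ∀ x : G, ∀ y ∈ A₂, ⁅x, y⁆ ∈ A₂)
    (hA₁ : A₁ ≠ ⊥) (hA₂ : A₂ ≠ ⊥)
    (hcompl : IsCompl A₁.toSubmodule A₂.toSubmodule) :
    (∃ (n : ℕ) (η : Module.Dual ℝ G), IsContact n η) ↔
      ((∃ (k : ℕ) (η : Module.Dual ℝ ↥A₁), IsContact k η) ∧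
          (∃ (m : ℕ) (α : Module.Dual ℝ ↥A₂), IsExactSymplectic m α)) ∨
        ((∃ (k : ℕ) (η : Module.Dual ℝ ↥A₂), IsContact k η) ∧
          (∃ (m : ℕ) (α : Module.Dual ℝ ↥A₁), IsExactSymplectic m α)) := by
  have hdim : Module.finrank ℝ A₁ + Module.finrank ℝ A₂ = Module.finrank ℝ G :=
    Submodule.finrank_add_eq_of_isCompl hcompl
  constructor
  · rintro ⟨n, η, hη⟩
    rw [← hdim] at hodd
    rcases Nat.even_or_odd' (Module.finrank ℝ A₁) with ⟨k, hk | hk⟩ <;>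
      rcases Nat.even_or_odd' (Module.finrank ℝ A₂) with ⟨m, hm | hm⟩
    · rw [Nat.odd_iff] at hodd
      omega
    · exact .inr (exists_isContact_and_exists_isExactSymplectic h₂ h₁ hcompl.symm hη hm hk)
    · exact .inl (exists_isContact_and_exists_isExactSymplectic h₁ h₂ hcompl hη hk hm)
    · rw [Nat.odd_iff] at hodd
      omega
  · rintro (⟨⟨k, β, hβ⟩, m, α, hα⟩ | ⟨⟨k, β, hβ⟩, m, α, hα⟩)
    · exact exists_isContact_of_isContact_of_isExactSymplectic h₁ h₂ hcompl hβ hα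
    · exact exists_isContact_of_isContact_of_isExactSymplectic h₂ h₁ hcompl.symm hβ hα

end ContactLie
end
end

section
/- Let 𝔤 be a finite-dimensional real Lie algebra of dimension ≥ 4 which contains an abelian subalgebra of codimension 1. Then 𝔤 admits no contact form and no exact symplectic form. -/
set_option maxHeartbeats 1000000
set_option maxRecDepth 8000

noncomputable section

namespace ContactLie

section DegreeLE

variable {L : Type*} [LieRing L] [LieAlgebra ℝ L]

/-- An alternating form has `S`-degree at most `p` if it vanishes as soon as more than `p` of its
arguments lie in the subspace `S`. -/
def DegreeLE (S : Submodule ℝ L) {k : ℕ} (f : L [⋀^Fin k]→ₗ[ℝ] ℝ) (p : ℕ) : Prop :=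
  ∀ v : Fin k → L, p < Nat.card {i // v i ∈ S} → f v = 0

lemma degreeLE_of_le (S : Submodule ℝ L) {k p : ℕ} (f : L [⋀^Fin k]→ₗ[ℝ] ℝ) (hkp : k ≤ p) :
    DegreeLE S f p := by
  intro v hv
  have hle := Finite.card_subtype_le (fun i => v i ∈ S)
  rw [Nat.card_fin] at hle
  omega

lemma degreeLE_dee {S : Submodule ℝ L} (hS : ∀ x ∈ S, ∀ y ∈ S, ⁅x, y⁆ = 0)
    (η : Module.Dual ℝ L) : DegreeLE S (dee η) 1 := by
  intro v hv
  have hall : ∀ i, v i ∈ S := by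
    by_contra! h
    obtain ⟨i, hi⟩ := h
    have hlt := Finite.card_subtype_lt (p := fun i => v i ∈ S) hi
    rw [Nat.card_fin] at hlt
    omega
  change -η ⁅v 0, v 1⁆ = 0
  rw [hS _ (hall 0) _ (hall 1), map_zero, neg_zero]

lemma DegreeLE.wedge {S : Submodule ℝ L} {a b p q : ℕ} {f : L [⋀^Fin a]→ₗ[ℝ] ℝ}
    {g : L [⋀^Fin b]→ₗ[ℝ] ℝ} (hf : DegreeLE S f p) (hg : DegreeLE S g q) :
    DegreeLE S (wedge f g) (p + q) := by
  intro v hv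
  suffices h : f.domCoprod g (v ∘ finSumFinEquiv) = 0 by
    change TensorProduct.lid ℝ ℝ (f.domCoprod g (v ∘ finSumFinEquiv)) = 0
    rw [h, map_zero]
  rw [AlternatingMap.domCoprod_apply, _root_.sum_apply]
  refine Finset.sum_eq_zero fun σ _ => ?_
  induction σ using Quotient.inductionOn' with | _ σ
  rw [AlternatingMap.domCoprod.summand_mk'', _root_.smul_apply,
    MultilinearMap.domDomCongr_apply, MultilinearMap.domCoprod_apply]
  have hcard : Nat.card {i // v i ∈ S} =
      Nat.card {i // v (finSumFinEquiv (σ (Sum.inl i))) ∈ S} +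
        Nat.card {i // v (finSumFinEquiv (σ (Sum.inr i))) ∈ S} := by
    rw [← Nat.card_sum]
    exact Nat.card_congr
      (((σ.trans finSumFinEquiv).subtypeEquiv fun _ => Iff.rfl).symm.trans Equiv.subtypeSum)
  rcases lt_or_ge p (Nat.card {i // v (finSumFinEquiv (σ (Sum.inl i))) ∈ S}) with h | h
  · have h0 := hf (fun i => v (finSumFinEquiv (σ (Sum.inl i)))) h
    simp [h0]
  · have h0 := hg (fun i => v (finSumFinEquiv (σ (Sum.inr i)))) (by omega)
    simp [h0]

lemma degreeLE_pow2 {S : Submodule ℝ L} {ω : L [⋀^Fin 2]→ₗ[ℝ] ℝ} (hω : DegreeLE S ω 1) (n : ℕ) :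
    DegreeLE S (pow2 ω n) n := by
  induction n with
  | zero => exact degreeLE_of_le S _ le_rfl
  | succ n ih => exact ih.wedge hω

/-- A form of arity `k` and `S`-degree at most `k - 2` vanishes when `S` is a hyperplane. -/
lemma DegreeLE.eq_zero {S : Submodule ℝ L} [FiniteDimensional ℝ L]
    (hS : Module.finrank ℝ L = Module.finrank ℝ S + 1) {k p : ℕ} {f : L [⋀^Fin k]→ₗ[ℝ] ℝ}
    (hf : DegreeLE S f p) (hpk : p + 2 ≤ k) : f = 0 := by
  obtain ⟨C, hC⟩ := S.exists_isCompl
  have hC1 : Module.finrank ℝ C = 1 := by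
    have := Submodule.finrank_add_eq_of_isCompl hC
    omega
  let e := ((Module.finBasis ℝ S).prod (Module.finBasisOfFinrankEq ℝ C hC1)).map
    (Submodule.prodEquivOfIsCompl S C hC)
  have he : ∀ j, e j ∉ S → j = Sum.inr 0 := by
    rintro (j | j) hj
    · exact absurd (by simp [e]) hj
    · rw [Subsingleton.elim j 0]
  refine Module.Basis.ext_alternating e fun v hv => hf _ ?_
  have hsub : Subsingleton {i // ¬ e (v i) ∈ S} :=
    ⟨fun i j => Subtype.ext (hv ((he _ i.2).trans (he _ j.2).symm))⟩
  have hcompl := Finite.card_le_one_iff_subsingleton.2 hsub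
  classical
  have hsum := Nat.card_congr (Equiv.sumCompl fun i => e (v i) ∈ S)
  rw [Nat.card_sum, Nat.card_fin] at hsum
  omega

end DegreeLE

/-- **Proposition 3.8 (2).** A Lie algebra of dimension at least 4 containing
a codimension-1 abelian subalgebra admits no contact form and no exact symplectic form. -/
theorem codim_one_abelian_no_contact
    {G : Type*} [LieRing G] [LieAlgebra ℝ G]
    (hdim : 4 ≤ Module.finrank ℝ G)
    (A : LieSubalgebra ℝ G) (hab : ∀ x ∈ A, ∀ y ∈ A, ⁅x, y⁆ = (0 : G))
    (hcodim : Module.finrank ℝ G = Module.finrank ℝ ↥A + 1) :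
    (∀ (n : ℕ) (η : Module.Dual ℝ G), ¬ IsContact n η) ∧
      (∀ (n : ℕ) (α : Module.Dual ℝ G), ¬ IsExactSymplectic n α) := by
  have : FiniteDimensional ℝ G := Module.finite_of_finrank_pos (by omega)
  have hdee (η : Module.Dual ℝ G) : DegreeLE A.toSubmodule (dee η) 1 := degreeLE_dee hab η
  refine ⟨fun n η h => h.2 ?_, fun n α h => h.2 ?_⟩
  · have hn := h.1
    exact ((degreeLE_pow2 (hdee η) n).wedge (degreeLE_of_le _ (oneForm η) le_rfl)).eq_zero
      hcodim (by omega)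
  · have hn := h.1
    exact (degreeLE_pow2 (hdee α) n).eq_zero hcodim (by omega)

end ContactLie
end
end

section
/- Every 3-dimensional nonabelian real Lie algebra admits a contact form, except the Lie algebra ℝ² ⋊ ℝ·id, i.e., the semidirect product of the abelian ideal ℝ² and a line ℝe₁ acting on ℝ² by the identity map (equivalently, the Lie algebra with bracket [x, y] = l(y)x − l(x)y for a nonzero linear form l); this exceptional Lie algebra admits no contact form. -/
set_option maxHeartbeats 1000000
set_option maxRecDepth 8000

noncomputable section

namespace ContactLie

section Wedge

variable {L : Type*} [LieRing L] [LieAlgebra ℝ L]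

/-- The wedge product as an antisymmetrization over all permutations. -/
theorem factorial_mul_wedge_apply {a b : ℕ} (f : L [⋀^Fin a]→ₗ[ℝ] ℝ) (g : L [⋀^Fin b]→ₗ[ℝ] ℝ)
    (v : Fin (a + b) → L) :
    (a.factorial * b.factorial : ℝ) * wedge f g v = ∑ σ : Equiv.Perm (Fin (a + b)),
      (Equiv.Perm.sign σ : ℤ) *
        (f (fun i => v (σ (Fin.castAdd b i))) * g (fun i => v (σ (Fin.natAdd a i)))) := by
  have h := congrArg (fun F => TensorProduct.lid ℝ ℝ (F (v ∘ finSumFinEquiv)))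
    (MultilinearMap.domCoprod_alternization_eq f g)
  simp only [MultilinearMap.alternatization_apply, AlternatingMap.smul_apply, map_nsmul, map_sum,
    Fintype.card_fin] at h
  rw [nsmul_eq_mul, Nat.cast_mul] at h
  refine Eq.trans h.symm ?_
  refine Fintype.sum_equiv finSumFinEquiv.permCongr _ _ fun σ => ?_
  rw [Equiv.Perm.sign_permCongr]
  rcases Int.units_eq_one_or (Equiv.Perm.sign σ) with hs | hs <;>
    simp [hs, Equiv.permCongr_apply]

theorem sum_perm_fin_two {M : Type*} [AddCommMonoid M] (F : Equiv.Perm (Fin 2) → M) :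
    ∑ σ, F σ = F 1 + F (Equiv.swap 0 1) := by
  have h : (Finset.univ : Finset (Equiv.Perm (Fin 2))) = {1, Equiv.swap 0 1} := by decide
  rw [h, Finset.sum_pair (by decide)]

theorem sum_perm_fin_three {M : Type*} [AddCommMonoid M] (F : Equiv.Perm (Fin 3) → M) :
    ∑ σ, F σ = F 1 + (F (Equiv.swap 0 1) + (F (Equiv.swap 0 2) + (F (Equiv.swap 1 2) +
      (F (finRotate 3) + F (finRotate 3)⁻¹)))) := by
  have h : (Finset.univ : Finset (Equiv.Perm (Fin 3))) = {1, Equiv.swap 0 1, Equiv.swap 0 2,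
    Equiv.swap 1 2, finRotate 3, (finRotate 3)⁻¹} := by decide
  rw [h, Finset.sum_insert (by decide), Finset.sum_insert (by decide),
    Finset.sum_insert (by decide), Finset.sum_insert (by decide), Finset.sum_pair (by decide)]

theorem pow2_one_dee_apply (η : Module.Dual ℝ L) (v : Fin 2 → L) :
    pow2 (dee η) 1 v = -η ⁅v 0, v 1⁆ := by
  have h := factorial_mul_wedge_apply (pow2 (dee η) 0) (dee η) v
  have hs := sum_perm_fin_two fun σ => ((Equiv.Perm.sign σ : ℤ) : ℝ) * (1 * -η ⁅v (σ 0), v (σ 1)⁆)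
  have h' : ((Nat.factorial 0 : ℝ) * Nat.factorial 2) * pow2 (dee η) 1 v = _ := h.trans hs
  have hl : ⁅v 1, v 0⁆ = -⁅v 0, v 1⁆ := (lie_skew _ _).symm
  simp [hl, -lie_skew] at h'
  linarith

theorem wedge_dee_oneForm_apply (η : Module.Dual ℝ L) (v : Fin 3 → L) :
    wedge (pow2 (dee η) 1) (oneForm η) v =
      -(η ⁅v 0, v 1⁆ * η (v 2) + η ⁅v 1, v 2⁆ * η (v 0) + η ⁅v 2, v 0⁆ * η (v 1)) := by
  have h := factorial_mul_wedge_apply (pow2 (dee η) 1) (oneForm η) v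
  simp only [pow2_one_dee_apply] at h
  have hs := sum_perm_fin_three fun σ =>
    ((Equiv.Perm.sign σ : ℤ) : ℝ) * (-η ⁅v (σ 0), v (σ 1)⁆ * η (v (σ 2)))
  have h' : ((Nat.factorial 2 : ℝ) * Nat.factorial 1) *
    wedge (pow2 (dee η) 1) (oneForm η) v = _ := h.trans hs
  have h10 : ⁅v 1, v 0⁆ = -⁅v 0, v 1⁆ := (lie_skew _ _).symm
  have h21 : ⁅v 2, v 1⁆ = -⁅v 1, v 2⁆ := (lie_skew _ _).symm
  have h02 : ⁅v 0, v 2⁆ = -⁅v 2, v 0⁆ := (lie_skew _ _).symm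
  have r0 : (finRotate 3)⁻¹ 0 = 2 := by decide
  have r1 : (finRotate 3)⁻¹ 1 = 0 := by decide
  have r2 : (finRotate 3)⁻¹ 2 = 1 := by decide
  have s0 : finRotate 3 0 = 1 := by decide
  have s1 : finRotate 3 1 = 2 := by decide
  have s2 : finRotate 3 2 = 0 := by decide
  have t2 : Equiv.swap (0 : Fin 3) 1 2 = 2 := by decide
  have t1 : Equiv.swap (0 : Fin 3) 2 1 = 1 := by decide
  have t0 : Equiv.swap (1 : Fin 3) 2 0 = 0 := by decide
  simp only [r0, r1, r2, s0, s1, s2, t0, t1, t2, Equiv.swap_apply_left, Equiv.swap_apply_right,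
    Equiv.Perm.sign_inv, sign_finRotate, Equiv.Perm.sign_one, Equiv.Perm.coe_one, id_eq,
    Equiv.Perm.sign_swap (show (0 : Fin 3) ≠ 1 by decide),
    Equiv.Perm.sign_swap (show (0 : Fin 3) ≠ 2 by decide),
    Equiv.Perm.sign_swap (show (1 : Fin 3) ≠ 2 by decide), h10, h21, h02, map_neg] at h'
  norm_num at h'
  linarith

end Wedge

/-- In dimension 3, if `∂η ∧ η = 0` for all `η` then the bracket has the form
`⁅x, y⁆ = l y • x - l x • y`. -/
theorem exists_lie_eq_of_forall_cyclic_sum_eq_zero {G : Type*} [LieRing G] [LieAlgebra ℝ G]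
    (b : Module.Basis (Fin 3) ℝ G)
    (h : ∀ η : Module.Dual ℝ G,
      η ⁅b 0, b 1⁆ * η (b 2) + η ⁅b 1, b 2⁆ * η (b 0) + η ⁅b 2, b 0⁆ * η (b 1) = 0) :
    ∃ l : Module.Dual ℝ G, ∀ x y : G, ⁅x, y⁆ = l y • x - l x • y := by
  have h0 := h (b.coord 0)
  have h1 := h (b.coord 1)
  have h2 := h (b.coord 2)
  have h01 := h (b.coord 0 + b.coord 1)
  have h02 := h (b.coord 0 + b.coord 2)
  have h12 := h (b.coord 1 + b.coord 2)
  simp at h0 h1 h2 h01 h02 h12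
  have h10 : ⁅b 1, b 0⁆ = -⁅b 0, b 1⁆ := (lie_skew _ _).symm
  have h21 : ⁅b 2, b 1⁆ = -⁅b 1, b 2⁆ := (lie_skew _ _).symm
  have h20 : ⁅b 0, b 2⁆ = -⁅b 2, b 0⁆ := (lie_skew _ _).symm
  let l : Module.Dual ℝ G := b.constr ℝ
    ![-b.repr ⁅b 0, b 1⁆ 1, b.repr ⁅b 0, b 1⁆ 0, b.repr ⁅b 1, b 2⁆ 1]
  have l0 : l (b 0) = -b.repr ⁅b 0, b 1⁆ 1 := by simp [l]
  have l1 : l (b 1) = b.repr ⁅b 0, b 1⁆ 0 := by simp [l]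
  have l2 : l (b 2) = b.repr ⁅b 1, b 2⁆ 1 := by simp [l]
  let R : G →ₗ[ℝ] G →ₗ[ℝ] G := (LinearMap.lsmul ℝ G ∘ₗ l).flip - LinearMap.lsmul ℝ G ∘ₗ l
  have hR : (LieModule.toEnd ℝ G G : G →ₗ[ℝ] Module.End ℝ G) = R := by
    refine b.ext fun i => b.ext fun j => b.ext_elem fun k => ?_
    fin_cases i <;> fin_cases j <;> fin_cases k <;>
      simp [R, l0, l1, l2, h10, h21, h20, -lie_skew] <;> linarith
  exact ⟨l, fun x y => by simpa [R] using LinearMap.congr_fun₂ hR x y⟩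

/-- **Proposition 4.1.** A 3-dimensional nonabelian real Lie algebra admits a
contact form iff it is not the Lie algebra `ℝ² ⋊ ℝ id`, i.e. iff its bracket is not of the
form `⁅x, y⁆ = l y • x - l x • y` for a nonzero linear form `l`. -/
theorem three_dim_contact_iff
    {G : Type*} [LieRing G] [LieAlgebra ℝ G]
    (hdim : Module.finrank ℝ G = 3) (hnonab : ¬ ∀ x y : G, ⁅x, y⁆ = 0) :
    (∃ η : Module.Dual ℝ G, IsContact 1 η) ↔
      ¬ ∃ l : Module.Dual ℝ G, l ≠ 0 ∧ ∀ x y : G, ⁅x, y⁆ = l y • x - l x • y := by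
  constructor
  · rintro ⟨η, -, hη⟩ ⟨l, -, hl⟩
    refine hη (AlternatingMap.ext fun v => ?_)
    refine (wedge_dee_oneForm_apply η v).trans ?_
    simp only [hl, map_sub, map_smul, smul_eq_mul, AlternatingMap.zero_apply]
    ring
  · intro hl
    by_contra! hc
    let b : Module.Basis (Fin 3) ℝ G :=
      have := Module.finite_of_finrank_pos (R := ℝ) (M := G) (by omega)
      Module.finBasisOfFinrankEq ℝ G hdim
    obtain ⟨l, h⟩ := exists_lie_eq_of_forall_cyclic_sum_eq_zero b fun η => by
      have hw : wedge (pow2 (dee η) 1) (oneForm η) = 0 := by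
        by_contra hne
        exact hc η ⟨hdim, hne⟩
      have hv := wedge_dee_oneForm_apply η b
      rw [hw] at hv
      exact neg_eq_zero.mp hv.symm
    refine hl ⟨l, ?_, h⟩
    rintro rfl
    exact hnonab fun x y => by simp [h]

end ContactLie
end
end
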